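/- Let H : ℝ^n × ℝ^n → ℝ and u : ℝ^n → ℝ be continuously differentiable, and let k ∈ ℝ satisfy u(q) < k for all q ∈ ℝ^n. Suppose θ = (Q, P) : ℝ → ℝ^n × ℝ^n solves Hamilton's equations for the Hamiltonian (q,p) ↦ H(q,p) + u(q) and satisfies the energy condition H(Q(t),P(t)) + u(Q(t)) = k for all t. Let σ : ℝ → ℝ be differentiable with σ(0) = 0 and σ'(t) = 1/(k − u(Q(σ(t)))) for all t. Then the reparametrized curve t ↦ θ(σ(t)) solves Hamilton's equations for the Hamiltonian H̃(q,p) := H(q,p)/(k − u(q)), and H̃(Q(σ(t)), P(σ(t))) = 1 for all t (the Maupertuis principle in coordinates). -/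

import Mathlib

/-!
The phase curve `θ` is an integral curve of the Hamiltonian vector field of `H + u`, contained in
the level `H + u = k`. On that level `H / (k - u)` equals `1`, and its differential is
`(dH - d(k - u)) / (k - u) = d(H + u) / (k - u)`. The two Hamiltonian vector fields are therefore
proportional along `θ`, and the factor `1 / (k - u)` is the speed `σ'` of the reparametrization.
-/

noncomputable section

/-- A differentiable curve `(Q, P)` solves Hamilton's equations for `K` if
`Q' = ∇ₚ K(Q,P)` and `P' = -∇_q K(Q,P)`. -/
def SolvesHamilton {n : ℕ} (K : EuclideanSpace ℝ (Fin n) × EuclideanSpace ℝ (Fin n) → ℝ)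
    (Q P : ℝ → EuclideanSpace ℝ (Fin n)) : Prop :=
  ∀ t : ℝ,
    HasDerivAt Q (gradient (fun p => K (Q t, p)) (P t)) t ∧
    HasDerivAt P (-gradient (fun q => K (q, P t)) (Q t)) t

section Gradient

variable {𝕜 : Type*} [NontriviallyNormedField 𝕜] {E : Type*} [NormedAddCommGroup E]
  [NormedSpace 𝕜 E]

theorem hasFDerivAt_div_of_eq {f g : E → 𝕜} {f' g' : E →L[𝕜] 𝕜} {x : E}
    (hf : HasFDerivAt f f' x) (hg : HasFDerivAt g g' x) (hfg : f x = g x) (hg₀ : g x ≠ 0) :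
    HasFDerivAt (fun y => f y / g y) ((g x)⁻¹ • (f' - g')) x := by
  have hmul : HasFDerivAt (fun y => f y / g y)
      (f x • (-(g x ^ 2)⁻¹ • g') + (g x)⁻¹ • f') x := by
    simpa only [div_eq_mul_inv, Function.comp_apply] using
      hf.fun_mul ((hasDerivAt_inv hg₀).comp_hasFDerivAt x hg)
  refine hmul.congr_fderiv ?_
  rw [hfg]
  match_scalars <;> field_simp

variable {F : Type*} [NormedAddCommGroup F] [InnerProductSpace ℝ F] [CompleteSpace F]

theorem gradient_add_const (f : F → ℝ) (c : ℝ) (x : F) :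
    gradient (fun y => f y + c) x = gradient f x := by
  rw [gradient, fderiv_add_const, gradient]

theorem gradient_div_const (f : F → ℝ) (c : ℝ) (x : F) :
    gradient (fun y => f y / c) x = c⁻¹ • gradient f x := by
  have hsmul : (fun y => f y / c) = c⁻¹ • f := funext fun y => div_eq_inv_mul (f y) c
  rw [gradient, hsmul, fderiv_const_smul_field, Pi.smul_apply, map_smul, gradient]

theorem gradient_div_sub_of_add_eq {f u : F → ℝ} {x : F} {k : ℝ} (hf : DifferentiableAt ℝ f x)
    (hu : DifferentiableAt ℝ u x) (hfu : f x + u x = k) (hk : u x ≠ k) :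
    gradient (fun y => f y / (k - u y)) x = (k - u x)⁻¹ • gradient (fun y => f y + u y) x := by
  have hdiv := hasFDerivAt_div_of_eq hf.hasFDerivAt (hu.hasFDerivAt.const_sub k)
    (eq_sub_of_add_eq hfu) (sub_ne_zero_of_ne hk.symm)
  rw [gradient, hdiv.fderiv, sub_neg_eq_add, ← fderiv_fun_add hf hu, map_smul, gradient]

end Gradient

section Hamiltonian

variable {F : Type*} [NormedAddCommGroup F] [InnerProductSpace ℝ F] [CompleteSpace F]

/-- The Hamiltonian vector field `(q, p) ↦ (∇ₚ K, -∇_q K)` on the phase space `F × F` of a real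
Hilbert space `F`, with `F` identified with its dual by the inner product. -/
def hamiltonianVectorField (K : F × F → ℝ) (z : F × F) : F × F :=
  (gradient (fun p => K (z.1, p)) z.2, -gradient (fun q => K (q, z.2)) z.1)

theorem solvesHamilton_iff_isIntegralCurve {n : ℕ}
    {K : EuclideanSpace ℝ (Fin n) × EuclideanSpace ℝ (Fin n) → ℝ}
    {Q P : ℝ → EuclideanSpace ℝ (Fin n)} :
    SolvesHamilton K Q P ↔
      IsIntegralCurve (fun t => (Q t, P t)) (fun _ => hamiltonianVectorField K) :=
  forall_congr' fun _ => ⟨fun h => h.1.prodMk h.2, fun h => ⟨h.fst, h.snd⟩⟩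

theorem hamiltonianVectorField_div_sub {H : F × F → ℝ} {u : F → ℝ} {k : ℝ} {z : F × F}
    (hH : DifferentiableAt ℝ H z) (hu : DifferentiableAt ℝ u z.1) (hE : H z + u z.1 = k)
    (hk : u z.1 ≠ k) :
    hamiltonianVectorField (fun w => H w / (k - u w.1)) z =
      (k - u z.1)⁻¹ • hamiltonianVectorField (fun w => H w + u w.1) z := by
  have hHq : DifferentiableAt ℝ (fun q => H (q, z.2)) z.1 :=
    hH.comp z.1 (differentiableAt_id.prodMk (differentiableAt_const z.2))
  refine Prod.ext ?_ ?_
  · simp only [hamiltonianVectorField, Prod.smul_fst, gradient_div_const, gradient_add_const]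
  · simp only [hamiltonianVectorField, Prod.smul_snd, gradient_div_sub_of_add_eq hHq hu hE hk,
      smul_neg]

end Hamiltonian

theorem isIntegralCurveOn_comp {E : Type*} [NormedAddCommGroup E] [NormedSpace ℝ E]
    {γ : ℝ → E} {v w : ℝ → E → E} {σ c : ℝ → ℝ} {I J : Set ℝ} (hγ : IsIntegralCurveOn γ v I)
    (hσ : ∀ t ∈ J, HasDerivWithinAt σ (c t) J t) (hJI : Set.MapsTo σ J I)
    (hw : ∀ t ∈ J, w t (γ (σ t)) = c t • v (σ t) (γ (σ t))) :
    IsIntegralCurveOn (γ ∘ σ) w J := fun t ht =>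
  ((hγ (σ t) (hJI ht)).scomp t (hσ t ht) hJI).congr_deriv (hw t ht).symm

theorem maupertuis_principle_general {F : Type*} [NormedAddCommGroup F] [InnerProductSpace ℝ F]
    [CompleteSpace F] {H : F × F → ℝ} {u : F → ℝ} {k : ℝ} {θ : ℝ → F × F} {σ : ℝ → ℝ}
    {I J : Set ℝ} (hJI : Set.MapsTo σ J I)
    (hH : ∀ t ∈ J, DifferentiableAt ℝ H (θ (σ t)))
    (hu : ∀ t ∈ J, DifferentiableAt ℝ u (θ (σ t)).1)
    (hk : ∀ t ∈ J, u (θ (σ t)).1 ≠ k)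
    (hθ : IsIntegralCurveOn θ (fun _ => hamiltonianVectorField fun z => H z + u z.1) I)
    (hE : ∀ t ∈ J, H (θ (σ t)) + u (θ (σ t)).1 = k)
    (hσ : ∀ t ∈ J, HasDerivWithinAt σ (1 / (k - u (θ (σ t)).1)) J t) :
    IsIntegralCurveOn (θ ∘ σ) (fun _ => hamiltonianVectorField fun z => H z / (k - u z.1)) J ∧
      ∀ t ∈ J, H (θ (σ t)) / (k - u (θ (σ t)).1) = 1 := by
  refine ⟨isIntegralCurveOn_comp hθ hσ hJI fun t ht => ?_, fun t ht => ?_⟩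
  · rw [hamiltonianVectorField_div_sub (hH t ht) (hu t ht) (hE t ht) (hk t ht), one_div]
  · rw [eq_sub_of_add_eq (hE t ht), div_self (sub_ne_zero_of_ne (hk t ht).symm)]

/-- The Maupertuis principle in coordinates. -/
theorem maupertuis_principle (n : ℕ)
    (H : EuclideanSpace ℝ (Fin n) × EuclideanSpace ℝ (Fin n) → ℝ)
    (u : EuclideanSpace ℝ (Fin n) → ℝ) (k : ℝ)
    (hH : ContDiff ℝ 1 H) (hu : ContDiff ℝ 1 u)
    (hk : ∀ q, u q < k)
    (Q P : ℝ → EuclideanSpace ℝ (Fin n))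
    (hθ : SolvesHamilton (fun z => H z + u z.1) Q P)
    (hE : ∀ t : ℝ, H (Q t, P t) + u (Q t) = k)
    (σ : ℝ → ℝ) (hσ0 : σ 0 = 0)
    (hσ : ∀ t : ℝ, HasDerivAt σ (1 / (k - u (Q (σ t)))) t) :
    SolvesHamilton (fun z => H z / (k - u z.1))
      (fun t => Q (σ t)) (fun t => P (σ t)) ∧
    ∀ t : ℝ, H (Q (σ t), P (σ t)) / (k - u (Q (σ t))) = 1 := by
  simpa [solvesHamilton_iff_isIntegralCurve, isIntegralCurveOn_univ, Function.comp_def] using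
    maupertuis_principle_general (θ := fun t => (Q t, P t)) (Set.mapsTo_univ σ Set.univ)
      (fun _ _ => hH.differentiable one_ne_zero _) (fun _ _ => hu.differentiable one_ne_zero _)
      (fun _ _ => (hk _).ne) ((solvesHamilton_iff_isIntegralCurve.1 hθ).isIntegralCurveOn _)
      (fun t _ => hE (σ t)) (fun t _ => (hσ t).hasDerivWithinAt)
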